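/- arXiv:1805.02604 — 2 statements merged into one kernel-verified Lean document; each statement's English description precedes it below -/
import Mathlib

section
/- Let Ω ⊂ ℝ^N be open and bounded, let F : ℝ × ℝ^N → ℝ be of class C³, let u : ℝ^N → ℝ be bounded and of class C³ with all partial derivatives up to order 3 bounded, and let η, ζ : ℝ^N → ℝ^N be bounded and of class C³ with all partial derivatives up to order 3 bounded. Define Φ_t(x) := x + t·η(x) + (t²/2)·ζ(x), let τ > 0 be such that Φ_t is a bijection of ℝ^N for |t| < τ, set u_t(y) := u(Φ_t⁻¹(y)), and define 𝔄₁(t) := ∫_Ω F(u_t(y), ∇u_t(y)) dy for |t| < τ. Then 𝔄₁ is twice differentiable at t = 0 and 𝔄₁''(0) = ∫_Ω [ F_{zz}(∇u·η)² + 2 Σ_i F_{z p_i}(∇u·η) ∂_i(∇u·η) + Σ_{i,j} F_{p_i p_j} ∂_i(∇u·η) ∂_j(∇u·η) ] dx + ∫_Ω [ F_z X₀ + Σ_i F_{p_i} ∂_i X₀ ] dx, where all derivatives of F are evaluated at (u, ∇u) and X₀ := Σ_{i,j} ∂²u/∂x_i∂x_j η^i η^j + Σ_i ∂u/∂x_i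 (2((η·∇)η)^i − ζ^i). -/
open Filter MeasureTheory Topology
open scoped RealInnerProductSpace

namespace PaperAC

/-- The partial derivative `∂f/∂x_j` of a scalar function on `ℝ^N`. -/
noncomputable def pdv {N : ℕ} (f : (Fin N → ℝ) → ℝ) (j : Fin N) (x : Fin N → ℝ) : ℝ :=
  fderiv ℝ f x (Pi.single j 1)

/-- The advection field `(η·∇)η`, with components `((η·∇)η)^i = ∑_j η^j ∂η^i/∂x_j`. -/
noncomputable def advf {N : ℕ} (η : (Fin N → ℝ) → (Fin N → ℝ)) (x : Fin N → ℝ) :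
    Fin N → ℝ :=
  fun i => ∑ j, η x j * pdv (fun z => η z i) j x

/-- The gradient `∇u` of a scalar function on `ℝ^N`. -/
noncomputable def grad {N : ℕ} (u : (Fin N → ℝ) → ℝ) (x : Fin N → ℝ) : Fin N → ℝ :=
  fun i => pdv u i x

/-- `X₀ := (D²u·η, η) + (∇u, 2(η·∇)η − ζ)`. -/
noncomputable def X0 {N : ℕ} (u : (Fin N → ℝ) → ℝ) (η ζ : (Fin N → ℝ) → (Fin N → ℝ))
    (y : Fin N → ℝ) : ℝ :=
  (∑ i, ∑ j, pdv (pdv u i) j y * η y i * η y j)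
    + ∑ i, pdv u i y * (2 * advf η y i - ζ y i)

/-- `−∇u·η`. -/
noncomputable def nGradDot {N : ℕ} (u : (Fin N → ℝ) → ℝ) (η : (Fin N → ℝ) → (Fin N → ℝ))
    (x : Fin N → ℝ) : ℝ :=
  -(∑ i, pdv u i x * η x i)

/-- `F_z`, the partial derivative of `F = F(z,p)` in the scalar variable. -/
noncomputable def Fz {N : ℕ} (F : ℝ × (Fin N → ℝ) → ℝ) (z : ℝ) (p : Fin N → ℝ) : ℝ :=
  fderiv ℝ F (z, p) (1, 0)

/-- `F_{p_i}`. -/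
noncomputable def Fp {N : ℕ} (F : ℝ × (Fin N → ℝ) → ℝ) (i : Fin N) (z : ℝ) (p : Fin N → ℝ) :
    ℝ :=
  fderiv ℝ F (z, p) (0, Pi.single i 1)

/-- `F_{zz}`. -/
noncomputable def Fzz {N : ℕ} (F : ℝ × (Fin N → ℝ) → ℝ) (z : ℝ) (p : Fin N → ℝ) : ℝ :=
  fderiv ℝ (fun q => fderiv ℝ F q (1, 0)) (z, p) (1, 0)

/-- `F_{z p_i}`. -/
noncomputable def Fzp {N : ℕ} (F : ℝ × (Fin N → ℝ) → ℝ) (i : Fin N) (z : ℝ) (p : Fin N → ℝ) :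
    ℝ :=
  fderiv ℝ (fun q => fderiv ℝ F q ((0 : ℝ), Pi.single i 1)) (z, p) (1, 0)

/-- `F_{p_i p_j}`. -/
noncomputable def Fpp {N : ℕ} (F : ℝ × (Fin N → ℝ) → ℝ) (i j : Fin N) (z : ℝ)
    (p : Fin N → ℝ) : ℝ :=
  fderiv ℝ (fun q => fderiv ℝ F q ((0 : ℝ), Pi.single j 1)) (z, p) ((0 : ℝ), Pi.single i 1)

/-- `𝔄₁(t) = A(u ∘ Φ_t⁻¹) = ∫_Ω F(u_t, ∇u_t)`, the inner deformation of the functional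
`A(w) := ∫_Ω F(w, ∇w)`. -/
noncomputable def innerA {N : ℕ} (Ω : Set (Fin N → ℝ)) (F : ℝ × (Fin N → ℝ) → ℝ)
    (u : (Fin N → ℝ) → ℝ) (Φ : ℝ → (Fin N → ℝ) → (Fin N → ℝ)) (t : ℝ) : ℝ :=
  ∫ y in Ω, F (u (Function.invFun (Φ t) y),
      grad (fun z => u (Function.invFun (Φ t) z)) y)

/-- `t ↦ A(u + tφ) = ∫_Ω F(u + tφ, ∇u + t∇φ)`, the outer deformation of the functional
`A(w) := ∫_Ω F(w, ∇w)`. -/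
noncomputable def gateauxA {N : ℕ} (Ω : Set (Fin N → ℝ)) (F : ℝ × (Fin N → ℝ) → ℝ)
    (u φ : (Fin N → ℝ) → ℝ) (t : ℝ) : ℝ :=
  ∫ x in Ω, F (u x + t * φ x, fun i => pdv u i x + t * pdv φ i x)

/-- The matrix `M_t(x)` with entries `δ_{ij} + t ∂η^i/∂x_j + (t²/2) ∂W^i/∂x_j`. -/
noncomputable def defMat {N : ℕ} (η W : (Fin N → ℝ) → (Fin N → ℝ)) (t : ℝ)
    (x : Fin N → ℝ) : Matrix (Fin N) (Fin N) ℝ :=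
  Matrix.of fun i j =>
    (if i = j then (1 : ℝ) else 0) + t * pdv (fun z => η z i) j x
      + (t ^ 2 / 2) * pdv (fun z => W z i) j x

/-- `Φ(a) := ∫_0^a |s² − 1| ds`. -/
noncomputable def PhiAC (a : ℝ) : ℝ := ∫ s in (0 : ℝ)..a, |s ^ 2 - 1|

/-- All partial derivatives (= iterated Fréchet derivatives) of `f` up to order `n` are
bounded; the case `i = 0` says `f` itself is bounded. -/
def BddUpTo {N : ℕ} {E : Type*} [NormedAddCommGroup E] [NormedSpace ℝ E]
    (n : ℕ) (f : (Fin N → ℝ) → E) : Prop :=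
  ∀ i : ℕ, i ≤ n → ∃ C : ℝ, ∀ x, ‖iteratedFDeriv ℝ i f x‖ ≤ C


lemma aux_clm {N : ℕ} (L : (Fin N → ℝ) →L[ℝ] ℝ) (v : Fin N → ℝ) :
    L v = ∑ i, v i * L (Pi.single i 1) := by
  conv_lhs => rw [← Finset.univ_sum_single v]
  rw [map_sum]
  refine Finset.sum_congr rfl fun i _ => ?_
  have : (Pi.single i (v i) : Fin N → ℝ) = v i • Pi.single i 1 := by
    rw [← Pi.single_smul]; simp
  rw [this, map_smul, smul_eq_mul]

lemma aux_fd_apply {E : Type*} [NormedAddCommGroup E] [NormedSpace ℝ E]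
    {g : E → ℝ} {q : E} (hg : ContDiffAt ℝ 2 g q) (v w : E) :
    fderiv ℝ (fun r => fderiv ℝ g r v) q w = fderiv ℝ (fderiv ℝ g) q w v := by
  have h1 : DifferentiableAt ℝ (fderiv ℝ g) q :=
    (hg.fderiv_right (m := 1) (by norm_num)).differentiableAt (by norm_num)
  have := (h1.hasFDerivAt.clm_apply (hasFDerivAt_const v q)).fderiv
  rw [this]; simp

lemma aux_symm {E : Type*} [NormedAddCommGroup E] [NormedSpace ℝ E]
    {g : E → ℝ} {q : E} (hg : ContDiffAt ℝ 2 g q) (v w : E) :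
    fderiv ℝ (fderiv ℝ g) q w v = fderiv ℝ (fderiv ℝ g) q v w :=
  (hg.isSymmSndFDerivAt (by simp)) w v

lemma aux_cd_apply {E : Type*} [NormedAddCommGroup E] [NormedSpace ℝ E]
    {V : Type*} [NormedAddCommGroup V] [NormedSpace ℝ V]
    {g : E → V} {q : E} (m n : ℕ) (hmn : m + 1 ≤ n) (hg : ContDiffAt ℝ n g q) (v : E) :
    ContDiffAt ℝ m (fun r => fderiv ℝ g r v) q :=
  (hg.fderiv_right (m := m) (by exact_mod_cast hmn)).clm_apply contDiffAt_const

lemma aux_restrict {N : ℕ} {f : ℝ × (Fin N → ℝ) → ℝ} {h : (Fin N → ℝ) → ℝ} {t : ℝ}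
    {y : Fin N → ℝ}
    (hf : DifferentiableAt ℝ f (t, y)) (hfh : ∀ z, f (t, z) = h z) (v : Fin N → ℝ) :
    fderiv ℝ f (t, y) (0, v) = fderiv ℝ h y v := by
  have e : h = f ∘ fun z => (t, z) := by funext z; simp [hfh]
  have h1 : HasFDerivAt (fun z : Fin N → ℝ => (t, z))
      (ContinuousLinearMap.inr ℝ ℝ (Fin N → ℝ)) y := hasFDerivAt_prodMk_right t y
  have := (hf.hasFDerivAt.comp y h1).fderiv
  rw [e, this]; simp

lemma aux_paramInt {N : ℕ} (Ω : Set (Fin N → ℝ)) (hΩo : IsOpen Ω)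
    (hΩb : Bornology.IsBounded Ω) (G : ℝ × (Fin N → ℝ) → ℝ) (ε : ℝ)
    (hG : ∀ t y, |t| < ε → ContDiffAt ℝ 1 G (t, y)) (t : ℝ) (ht : |t| < ε) :
    HasDerivAt (fun s => ∫ y in Ω, G (s, y)) (∫ y in Ω, fderiv ℝ G (t, y) (1, 0)) t := by
  have hK : IsCompact (closure Ω) := hΩb.isCompact_closure
  obtain ⟨δ, hδ, hδε⟩ : ∃ δ > 0, Metric.closedBall t δ ⊆ {s | |s| < ε} :=
    Metric.nhds_basis_closedBall.mem_iff.1 ((isOpen_lt continuous_abs continuous_const).mem_nhds ht)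
  have hKK : IsCompact (Metric.closedBall t δ ×ˢ closure Ω) := (isCompact_closedBall t δ).prod hK
  have hc' : ∀ s y, |s| < ε → ContinuousAt (fun q => fderiv ℝ G q (1, 0)) (s, y) := fun s y hs =>
    (aux_cd_apply 0 1 (by norm_num) (by exact_mod_cast hG s y hs) (1, 0)).continuousAt
  obtain ⟨C, hC⟩ := hKK.exists_bound_of_continuousOn (f := fun q => fderiv ℝ G q (1, 0))
    (fun q hq => (hc' q.1 q.2 (hδε hq.1)).continuousWithinAt)
  have hsl : ∀ s, |s| < ε → Continuous fun y => G (s, y) := fun s hs =>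
    continuous_iff_continuousAt.2 fun y =>
      ContinuousAt.comp (f := fun y => (s, y)) (hG s y hs).continuousAt (by fun_prop)
  have hsl' : ∀ s, |s| < ε → Continuous fun y => fderiv ℝ G (s, y) (1, 0) := fun s hs =>
    continuous_iff_continuousAt.2 fun y =>
      ContinuousAt.comp (f := fun y => (s, y)) (hc' s y hs) (by fun_prop)
  refine (hasDerivAt_integral_of_dominated_loc_of_deriv_le (μ := volume.restrict Ω)
    (F := fun s y => G (s, y)) (F' := fun s y => fderiv ℝ G (s, y) (1, 0))
    (bound := fun _ => C) (Metric.closedBall_mem_nhds t hδ) ?_ ?_ ?_ ?_ ?_ ?_).2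
  · filter_upwards [Metric.closedBall_mem_nhds t hδ] with s hs
    exact (hsl s (hδε hs)).aestronglyMeasurable
  · exact ((hsl t ht).continuousOn.integrableOn_compact hK).mono_set subset_closure
  · exact (hsl' t ht).aestronglyMeasurable
  · filter_upwards [ae_restrict_mem hΩo.measurableSet] with y hy s hs
    exact hC (s, y) ⟨hs, subset_closure hy⟩
  · exact (continuous_const.continuousOn.integrableOn_compact hK).mono_set subset_closure
  · refine Eventually.of_forall fun y s hs => ?_
    have h1 : HasDerivAt (fun s : ℝ => (s, y)) ((1 : ℝ), (0 : Fin N → ℝ)) s :=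
      (hasDerivAt_id s).prodMk (hasDerivAt_const s y)
    exact ((hG s y (hδε hs)).differentiableAt (by norm_num)).hasFDerivAt.comp_hasDerivAt s h1

lemma aux_inv {N : ℕ} (η ζ : (Fin N → ℝ) → (Fin N → ℝ))
    (hη : ContDiff ℝ 3 η) (hηb : BddUpTo 3 η)
    (hζ : ContDiff ℝ 3 ζ) (hζb : BddUpTo 3 ζ)
    (Φ : ℝ → (Fin N → ℝ) → (Fin N → ℝ))
    (hΦ : ∀ t x, Φ t x = x + t • η x + (t ^ 2 / 2) • ζ x)
    (τ : ℝ) (hτ : 0 < τ)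
    (hbij : ∀ t : ℝ, |t| < τ → Function.Bijective (Φ t)) :
    ∃ ε > 0, ε ≤ τ ∧ ∀ t y, |t| < ε →
      ContDiffAt ℝ 3 (fun q : ℝ × (Fin N → ℝ) => Function.invFun (Φ q.1) q.2) (t, y) := by
  obtain ⟨C1, hC1⟩ := hηb 1 (by norm_num)
  obtain ⟨C2, hC2⟩ := hζb 1 (by norm_num)
  simp only [norm_iteratedFDeriv_one] at hC1 hC2
  have hC1' : 0 ≤ C1 := (norm_nonneg _).trans (hC1 0)
  have hC2' : 0 ≤ C2 := (norm_nonneg _).trans (hC2 0)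
  refine ⟨min τ (min 1 (1 / (C1 + C2 + 1))), by positivity, min_le_left _ _, ?_⟩
  intro t y ht
  obtain ⟨ht1, ht2, ht3⟩ : |t| < τ ∧ |t| < 1 ∧ |t| < 1 / (C1 + C2 + 1) := by
    simpa [lt_min_iff] using ht
  rw [lt_div_iff₀ (by positivity)] at ht3
  obtain ⟨x, rfl⟩ := (hbij t ht1).2 y
  set P : ℝ × (Fin N → ℝ) → ℝ × (Fin N → ℝ) :=
    fun q => (q.1, q.2 + q.1 • η q.2 + (q.1 ^ 2 / 2) • ζ q.2) with hP
  have hPc : ContDiff ℝ 3 P := by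
    have h1 : ContDiff ℝ 3 (fun q : ℝ × (Fin N → ℝ) => η q.2) := hη.comp contDiff_snd
    have h2 : ContDiff ℝ 3 (fun q : ℝ × (Fin N → ℝ) => ζ q.2) := hζ.comp contDiff_snd
    exact contDiff_fst.prodMk ((contDiff_snd.add (contDiff_fst.smul h1)).add
      (((contDiff_fst.pow 2).div_const 2).smul h2))
  have hPd : HasFDerivAt P (fderiv ℝ P (t, x)) (t, x) :=
    (hPc.differentiable (by norm_num) _).hasFDerivAt
  have hval : ∀ s v, fderiv ℝ P (t, x) (s, v) = (s, v + (t • fderiv ℝ η x v + s • η x)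
      + ((t ^ 2 / 2) • fderiv ℝ ζ x v + (t * s) • ζ x)) := by
    intro s v
    have e1 : HasDerivAt (fun r : ℝ => t + r * s) s 0 := by
      simpa using ((hasDerivAt_id (0:ℝ)).mul_const s).const_add t
    have e2 : HasDerivAt (fun r : ℝ => x + r • v) v 0 := by
      simpa using ((hasDerivAt_id (0:ℝ)).smul_const v).const_add x
    have f1 : HasFDerivAt η (fderiv ℝ η x) (x + (0:ℝ) • v) := by
      simpa using (hη.differentiable (by norm_num) x).hasFDerivAt
    have f2 : HasFDerivAt ζ (fderiv ℝ ζ x) (x + (0:ℝ) • v) := by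
      simpa using (hζ.differentiable (by norm_num) x).hasFDerivAt
    have f3 : HasFDerivAt P (fderiv ℝ P (t, x)) (t + 0 * s, x + (0:ℝ) • v) := by
      simpa using hPd
    have g1 := f1.comp_hasDerivAt (0:ℝ) e2
    have g2 := f2.comp_hasDerivAt (0:ℝ) e2
    have g3 := f3.comp_hasDerivAt (0:ℝ) (e1.prodMk e2)
    have g4 := e1.prodMk ((e2.add (e1.smul g1)).add (((e1.pow 2).div_const 2).smul g2))
    have := g3.unique g4
    rw [this]
    simp
    ring_nf
  have hinj : Function.Injective (fderiv ℝ P (t, x)) := by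
    rw [injective_iff_map_eq_zero]
    rintro ⟨s, v⟩ h
    rw [hval] at h
    obtain ⟨rfl, h2⟩ := Prod.mk.inj h
    simp only [zero_smul, add_zero, mul_zero] at h2
    have hv : v = -(t • fderiv ℝ η x v + (t ^ 2 / 2) • fderiv ℝ ζ x v) := by
      rw [eq_neg_iff_add_eq_zero, ← add_assoc]; exact h2
    have n1 : ‖t • fderiv ℝ η x v‖ ≤ |t| * (C1 * ‖v‖) := by
      rw [norm_smul, Real.norm_eq_abs]
      gcongr
      exact ((fderiv ℝ η x).le_opNorm v).trans (by gcongr; exact hC1 x)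
    have n2 : ‖(t ^ 2 / 2) • fderiv ℝ ζ x v‖ ≤ |t| * (C2 * ‖v‖) := by
      rw [norm_smul, Real.norm_eq_abs]
      have hh : |t ^ 2 / 2| ≤ |t| := by
        rw [abs_div, abs_pow]; norm_num; nlinarith [abs_nonneg t, sq_abs t]
      exact mul_le_mul hh (((fderiv ℝ ζ x).le_opNorm v).trans (by gcongr; exact hC2 x))
        (norm_nonneg _) (abs_nonneg t)
    have n3 : ‖v‖ ≤ |t| * (C1 * ‖v‖) + |t| * (C2 * ‖v‖) := by
      conv_lhs => rw [hv, norm_neg]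
      exact (norm_add_le _ _).trans (add_le_add n1 n2)
    have hv0 : v = 0 := by
      by_contra hne
      have : 0 < ‖v‖ := norm_pos_iff.2 hne
      have : 1 ≤ |t| * (C1 + C2) := by
        by_contra hlt
        push Not at hlt
        nlinarith
      nlinarith [abs_nonneg t]
    rw [hv0]; rfl
  let e : (ℝ × (Fin N → ℝ)) ≃L[ℝ] (ℝ × (Fin N → ℝ)) :=
    (LinearEquiv.ofInjectiveEndo (fderiv ℝ P (t, x)).toLinearMap hinj).toContinuousLinearEquiv
  have he : (e : (ℝ × (Fin N → ℝ)) →L[ℝ] (ℝ × (Fin N → ℝ))) = fderiv ℝ P (t, x) := by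
    ext1 <;> rfl
  rw [← he] at hPd
  have hn : (3 : WithTop ℕ∞) ≠ 0 := by norm_num
  have hst := hPc.contDiffAt.hasStrictFDerivAt' hPd hn
  have huniq := hst.localInverse_unique
    (g := fun q : ℝ × (Fin N → ℝ) => (q.1, Function.invFun (Φ q.1) q.2)) (by
      have : {q : ℝ × (Fin N → ℝ) | |q.1| < τ} ∈ 𝓝 (t, x) :=
        (isOpen_lt (by fun_prop) continuous_const).mem_nhds ht1
      filter_upwards [this] with q hq
      have := Function.leftInverse_invFun (hbij q.1 hq).1 q.2
      rw [hΦ] at this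
      simp only [hP]
      rw [this])
  have hcd := (hPc.contDiffAt.to_localInverse hPd hn).congr_of_eventuallyEq
    (f₁ := fun q : ℝ × (Fin N → ℝ) => (q.1, Function.invFun (Φ q.1) q.2)) huniq
  have hPx : P (t, x) = (t, Φ t x) := by simp [hP, hΦ]
  rw [hPx] at hcd
  exact hcd.snd

lemma aux_a {N : ℕ} (u : (Fin N → ℝ) → ℝ) (η : (Fin N → ℝ) → (Fin N → ℝ)) (z : Fin N → ℝ) :
    ∑ i, pdv u i z * η z i = fderiv ℝ u z (η z) := by
  rw [aux_clm]
  exact Finset.sum_congr rfl fun i _ => mul_comm _ _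

lemma aux_X0 {N : ℕ} (u : (Fin N → ℝ) → ℝ) (hu : ContDiff ℝ 3 u)
    (η ζ : (Fin N → ℝ) → (Fin N → ℝ)) (hη : ContDiff ℝ 3 η) (x : Fin N → ℝ) :
    X0 u η ζ x = fderiv ℝ (fderiv ℝ u) x (η x) (η x)
      + fderiv ℝ u x ((2 : ℝ) • fderiv ℝ η x (η x) - ζ x) := by
  have hu2 : ContDiffAt ℝ 2 u x := hu.contDiffAt.of_le (by norm_num)
  unfold X0
  congr 1
  · have h1 : ∀ i, fderiv ℝ (fderiv ℝ u) x (η x) (Pi.single i 1)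
        = ∑ j, η x j * pdv (pdv u i) j x := by
      intro i
      rw [← aux_fd_apply hu2, aux_clm]
      rfl
    rw [aux_clm]
    refine Finset.sum_congr rfl fun i _ => ?_
    rw [h1, Finset.mul_sum]
    exact Finset.sum_congr rfl fun j _ => by ring
  · rw [aux_clm]
    refine Finset.sum_congr rfl fun i _ => ?_
    have h2 : advf η x i = fderiv ℝ η x (η x) i := by
      have hd : DifferentiableAt ℝ η x := hη.differentiable (by norm_num) x
      have h3 : fderiv ℝ (fun z => η z i) x (η x) = fderiv ℝ η x (η x) i := by
        rw [fderiv_apply hd]; rfl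
      rw [← h3, aux_clm]
      rfl
    rw [h2]
    simp [pdv]
    ring

/-- first and second time derivative at zero of the deformed function. -/
lemma aux_core {N : ℕ} (u : (Fin N → ℝ) → ℝ) (hu : ContDiff ℝ 3 u)
    (η ζ : (Fin N → ℝ) → (Fin N → ℝ)) (hη : ContDiff ℝ 3 η)
    (g : ℝ × (Fin N → ℝ) → ℝ) (ε : ℝ) (hε : 0 < ε)
    (hg : ∀ t y, |t| < ε → ContDiffAt ℝ 3 g (t, y))
    (hgu : ∀ t x, |t| < ε → g (t, x + t • η x + (t ^ 2 / 2) • ζ x) = u x) :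
    (∀ x, fderiv ℝ g (0, x) (1, 0) = -(fderiv ℝ u x (η x))) ∧
    (∀ x, fderiv ℝ (fderiv ℝ g) (0, x) (1, 0) (1, 0) = X0 u η ζ x) := by
  have h0 : |(0:ℝ)| < ε := by simpa using hε
  have hg0 : ∀ z, g (0, z) = u z := fun z => by simpa using hgu 0 z h0
  have hnear : ∀ s : ℝ, |s| < ε → ∀ᶠ r in 𝓝 s, |r| < ε := fun s hs =>
    (isOpen_lt continuous_abs continuous_const).mem_nhds hs
  have hc : ∀ (x : Fin N → ℝ) (s : ℝ), HasDerivAt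
      (fun s : ℝ => (s, x + s • η x + (s ^ 2 / 2) • ζ x)) ((1 : ℝ), η x + s • ζ x) s := by
    intro x s
    have e1 := hasDerivAt_id s
    have := e1.prodMk (((e1.smul_const (η x)).const_add x).add
      (((e1.pow 2).div_const 2).smul_const (ζ x)))
    convert! this using 1
    simp
  have hA : ∀ x s, |s| < ε →
      fderiv ℝ g (s, x + s • η x + (s ^ 2 / 2) • ζ x) (1, η x + s • ζ x) = 0 := by
    intro x s hs
    have h1 := ((hg s (x + s • η x + (s ^ 2 / 2) • ζ x) hs).differentiableAt
      (by norm_num)).hasFDerivAt.comp_hasDerivAt s (hc x s)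
    have h2 : HasDerivAt (g ∘ fun s : ℝ => (s, x + s • η x + (s ^ 2 / 2) • ζ x)) 0 s := by
      refine (hasDerivAt_const s (u x)).congr_of_eventuallyEq ?_
      filter_upwards [hnear s hs] with r hr
      exact hgu r x hr
    exact h1.unique h2
  have hsplit : ∀ v : Fin N → ℝ, ((1 : ℝ), v) = (1, 0) + (0, v) := fun v => by simp
  have hfirst : ∀ x, fderiv ℝ g (0, x) (1, 0) = -(fderiv ℝ u x (η x)) := by
    intro x
    have h1 := hA x 0 h0
    simp only [zero_smul, add_zero, ne_eq, OfNat.ofNat_ne_zero, not_false_eq_true, zero_pow,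
      zero_div] at h1
    rw [hsplit, map_add,
      aux_restrict ((hg 0 x h0).differentiableAt (by norm_num)) hg0] at h1
    linarith
  refine ⟨hfirst, fun x => ?_⟩
  have hg2 : ContDiffAt ℝ 2 g (0, x) := (hg 0 x h0).of_le (by norm_num)
  have hu2 : ContDiffAt ℝ 2 u x := hu.contDiffAt.of_le (by norm_num)
  have hdg : ∀ v, DifferentiableAt ℝ (fun r => fderiv ℝ g r v) (0, x) := fun v =>
    (aux_cd_apply 2 3 (by norm_num) (by exact_mod_cast hg 0 x h0) v).differentiableAt (by norm_num)
  have hd : HasFDerivAt (fderiv ℝ g) (fderiv ℝ (fderiv ℝ g) (0, x)) (0, x) :=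
    ((hg2.fderiv_right (m := 1) (by norm_num)).differentiableAt (by norm_num)).hasFDerivAt
  have hsec : fderiv ℝ (fderiv ℝ g) (0, x) (1, η x) (1, η x) + fderiv ℝ g (0, x) (0, ζ x) = 0 := by
    have hc0 := hc x 0
    have hd' : HasFDerivAt (fderiv ℝ g) (fderiv ℝ (fderiv ℝ g) (0, x))
        ((0:ℝ), x + (0:ℝ) • η x + ((0:ℝ) ^ 2 / 2) • ζ x) := by simpa using hd
    have h1 := hd'.comp_hasDerivAt (0:ℝ) hc0
    have h2 : HasDerivAt (fun s : ℝ => ((1 : ℝ), η x + s • ζ x)) ((0:ℝ), ζ x) 0 := by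
      have := (hasDerivAt_const (0:ℝ) (1:ℝ)).prodMk
        (((hasDerivAt_id (0:ℝ)).smul_const (ζ x)).const_add (η x))
      simpa using this
    have h3 := h1.clm_apply h2
    have h4 := h3.unique ((hasDerivAt_const (0:ℝ) (0:ℝ)).congr_of_eventuallyEq (by
      filter_upwards [hnear 0 h0] with r hr
      exact hA x r hr))
    simpa using h4
  have k1 : fderiv ℝ (fderiv ℝ g) (0, x) (0, η x) (1, 0)
      = -(fderiv ℝ (fderiv ℝ u) x (η x) (η x) + fderiv ℝ u x (fderiv ℝ η x (η x))) := by
    rw [← aux_fd_apply hg2, aux_restrict (hdg _) hfirst]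
    have hdu : HasFDerivAt (fderiv ℝ u) (fderiv ℝ (fderiv ℝ u) x) x :=
      ((hu2.fderiv_right (m := 1) (by norm_num)).differentiableAt (by norm_num)).hasFDerivAt
    have := (hdu.clm_apply (hη.differentiable (by norm_num) x).hasFDerivAt).neg.fderiv
    rw [show (fun z => -(fderiv ℝ u z (η z))) = -(fun z => fderiv ℝ u z (η z)) from rfl, this]
    simp
    ring
  have k2 : fderiv ℝ (fderiv ℝ g) (0, x) (0, η x) (0, η x)
      = fderiv ℝ (fderiv ℝ u) x (η x) (η x) := by
    rw [← aux_fd_apply hg2, aux_restrict (hdg _) (h := fun z => fderiv ℝ u z (η x)),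
      aux_fd_apply hu2]
    intro z
    exact aux_restrict ((hg 0 z h0).differentiableAt (by norm_num)) hg0 _
  have k3 : fderiv ℝ g (0, x) (0, ζ x) = fderiv ℝ u x (ζ x) :=
    aux_restrict ((hg 0 x h0).differentiableAt (by norm_num)) hg0 _
  have k4 := aux_symm hg2 (1, 0) (0, η x)
  rw [k3, hsplit (η x)] at hsec
  simp only [map_add, _root_.add_apply] at hsec
  rw [k1] at hsec
  rw [k1] at k4
  rw [k2, ← k4] at hsec
  rw [aux_X0 u hu η ζ hη x, map_sub, map_smul, smul_eq_mul]
  linarith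

lemma aux_F1 {N : ℕ} (F : ℝ × (Fin N → ℝ) → ℝ) (z : ℝ) (p : Fin N → ℝ) (α : ℝ) (w : Fin N → ℝ) :
    fderiv ℝ F (z, p) (α, w) = Fz F z p * α + ∑ i, Fp F i z p * w i := by
  have h1 : ((α, w) : ℝ × (Fin N → ℝ)) = α • (1, 0) + ContinuousLinearMap.inr ℝ ℝ _ w := by simp
  have h2 := aux_clm ((fderiv ℝ F (z, p)).comp (ContinuousLinearMap.inr ℝ ℝ _)) w
  simp only [ContinuousLinearMap.comp_apply] at h2
  rw [h1, map_add, map_smul, h2, smul_eq_mul]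
  simp only [Fz, Fp, ContinuousLinearMap.inr_apply]
  congr 1
  · ring
  · exact Finset.sum_congr rfl fun i _ => mul_comm _ _

lemma aux_F2 {N : ℕ} (F : ℝ × (Fin N → ℝ) → ℝ) (hF : ContDiff ℝ 3 F)
    (z : ℝ) (p : Fin N → ℝ) (α : ℝ) (w : Fin N → ℝ) :
    fderiv ℝ (fderiv ℝ F) (z, p) (-α, -w) (-α, -w)
      = Fzz F z p * α ^ 2 + 2 * ∑ i, Fzp F i z p * (α * w i)
        + ∑ i, ∑ j, Fpp F i j z p * w i * w j := by
  have hF2 : ContDiffAt ℝ 2 F (z, p) := hF.contDiffAt.of_le (by norm_num)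
  set B := fderiv ℝ (fderiv ℝ F) (z, p) with hB
  have hneg : ((-α, -w) : ℝ × (Fin N → ℝ)) = -(α, w) := rfl
  have h1 : ((α, w) : ℝ × (Fin N → ℝ)) = α • (1, 0) + ContinuousLinearMap.inr ℝ ℝ _ w := by simp
  have h2 : ∀ L : ℝ × (Fin N → ℝ) →L[ℝ] ℝ, L (α, w) = α * L (1, 0) + ∑ i, w i * L (0, Pi.single i 1) := by
    intro L
    have h2 := aux_clm (L.comp (ContinuousLinearMap.inr ℝ ℝ _)) w
    simp only [ContinuousLinearMap.comp_apply, ContinuousLinearMap.inr_apply] at h2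
    rw [h1, map_add, map_smul, ContinuousLinearMap.inr_apply, h2, smul_eq_mul]
  have h3 : ∀ v, B (α, w) v = α * B (1, 0) v + ∑ i, w i * B (0, Pi.single i 1) v := by
    intro v
    have := h2 (B.flip v)
    simpa using this
  have s1 : Fzz F z p = B (1, 0) (1, 0) := by rw [hB, ← aux_fd_apply hF2]; rfl
  have s2 : ∀ i, Fzp F i z p = B (1, 0) (0, Pi.single i 1) := by
    intro i; rw [hB, ← aux_fd_apply hF2]; rfl
  have s3 : ∀ i j, Fpp F i j z p = B (0, Pi.single i 1) (0, Pi.single j 1) := by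
    intro i j; rw [hB, ← aux_fd_apply hF2]; rfl
  have s4 : ∀ i, B (0, Pi.single i 1) (1, 0) = B (1, 0) (0, Pi.single i 1) := by
    intro i; exact aux_symm hF2 _ _
  rw [hneg, map_neg, map_neg, _root_.neg_apply, neg_neg, h3, h2 (B (1, 0)), s1]
  simp only [s2, s3, h2 (B (0, _)), s4, mul_add, Finset.sum_add_distrib, Finset.mul_sum]
  have e1 : ∀ i, w i * (α * B (1, 0) (0, Pi.single i 1)) = α * (w i * B (1, 0) (0, Pi.single i 1)) :=
    fun i => by ring
  have e2 : ∀ i, 2 * (B (1, 0) (0, Pi.single i 1) * (α * w i))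
      = α * (w i * B (1, 0) (0, Pi.single i 1)) + α * (w i * B (1, 0) (0, Pi.single i 1)) :=
    fun i => by ring
  have e3 : ∀ i j, w i * (w j * B (0, Pi.single i 1) (0, Pi.single j 1))
      = B (0, Pi.single i 1) (0, Pi.single j 1) * w i * w j := fun i j => by ring
  simp only [e1, e2, e3, Finset.sum_add_distrib]
  ring

theorem second_inner_variation_direct
    (N : ℕ) (Ω : Set (Fin N → ℝ)) (hΩo : IsOpen Ω) (hΩb : Bornology.IsBounded Ω)
    (F : ℝ × (Fin N → ℝ) → ℝ) (hF : ContDiff ℝ 3 F)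
    (u : (Fin N → ℝ) → ℝ) (hu : ContDiff ℝ 3 u) (hub : BddUpTo 3 u)
    (η ζ : (Fin N → ℝ) → (Fin N → ℝ))
    (hη : ContDiff ℝ 3 η) (hηb : BddUpTo 3 η)
    (hζ : ContDiff ℝ 3 ζ) (hζb : BddUpTo 3 ζ)
    (Φ : ℝ → (Fin N → ℝ) → (Fin N → ℝ))
    (hΦ : ∀ t x, Φ t x = x + t • η x + (t ^ 2 / 2) • ζ x)
    (τ : ℝ) (hτ : 0 < τ)
    (hbij : ∀ t : ℝ, |t| < τ → Function.Bijective (Φ t)) :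
    ∃ A1' : ℝ → ℝ,
      (∀ᶠ t in 𝓝 (0 : ℝ), HasDerivAt (innerA Ω F u Φ) (A1' t) t) ∧
      HasDerivAt A1'
        ((∫ x in Ω,
            (Fzz F (u x) (grad u x) * (∑ i, pdv u i x * η x i) ^ 2
              + 2 * ∑ i, Fzp F i (u x) (grad u x) * ((∑ j, pdv u j x * η x j)
                  * pdv (fun z => ∑ j, pdv u j z * η z j) i x)
              + ∑ i, ∑ j, Fpp F i j (u x) (grad u x)
                  * pdv (fun z => ∑ l, pdv u l z * η z l) i x
                  * pdv (fun z => ∑ l, pdv u l z * η z l) j x))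
          + ∫ x in Ω,
              (Fz F (u x) (grad u x) * X0 u η ζ x
                + ∑ i, Fp F i (u x) (grad u x) * pdv (X0 u η ζ) i x)) 0 := by
  obtain ⟨ε, hε, hετ, hΨ⟩ := aux_inv η ζ hη hηb hζ hζb Φ hΦ τ hτ hbij
  set g : ℝ × (Fin N → ℝ) → ℝ := fun q => u (Function.invFun (Φ q.1) q.2) with hgdef
  have hg : ∀ t y, |t| < ε → ContDiffAt ℝ 3 g (t, y) := fun t y ht =>
    hu.contDiffAt.comp (t, y) (hΨ t y ht)
  have hgu : ∀ t x, |t| < ε → g (t, x + t • η x + (t ^ 2 / 2) • ζ x) = u x := by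
    intro t x ht
    rw [← hΦ]
    simp only [hgdef]
    rw [Function.leftInverse_invFun (hbij t (ht.trans_le hετ)).1 x]
  have h0 : |(0:ℝ)| < ε := by simpa using hε
  have hg0 : ∀ z, g (0, z) = u z := fun z => by simpa using hgu 0 z h0
  obtain ⟨hc1, hc2⟩ := aux_core u hu η ζ hη g ε hε hg hgu
  have hnear : ∀ (s : ℝ) (y : Fin N → ℝ), |s| < ε →
      ∀ᶠ r : ℝ × (Fin N → ℝ) in 𝓝 (s, y), |r.1| < ε := fun s y hs =>
    (isOpen_lt (by fun_prop) continuous_const).mem_nhds hs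
  set H : ℝ × (Fin N → ℝ) → ℝ × (Fin N → ℝ) :=
    fun q => (g q, fun i => fderiv ℝ g q (0, Pi.single i 1)) with hHdef
  have hp : ∀ t y v, |t| < ε → ContDiffAt ℝ 2 (fun q => fderiv ℝ g q v) (t, y) :=
    fun t y v ht => by
      exact_mod_cast aux_cd_apply 2 3 (by norm_num) (by exact_mod_cast hg t y ht) v
  have hH : ∀ t y, |t| < ε → ContDiffAt ℝ 2 H (t, y) := fun t y ht =>
    ((hg t y ht).of_le (by norm_num)).prodMk (contDiffAt_pi.2 fun i => hp t y _ ht)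
  set H1 : ℝ × (Fin N → ℝ) → ℝ × (Fin N → ℝ) := fun q => fderiv ℝ H q (1, 0) with hH1def
  have hH1 : ∀ t y, |t| < ε → ContDiffAt ℝ 1 H1 (t, y) := fun t y ht => by
    have h := aux_cd_apply (g := H) (q := (t, y)) 1 2 (by norm_num)
      (by exact_mod_cast hH t y ht) (1, 0)
    exact_mod_cast h
  set H2 : ℝ × (Fin N → ℝ) → ℝ × (Fin N → ℝ) := fun q => fderiv ℝ H1 q (1, 0) with hH2def
  have hH2 : ∀ t y, |t| < ε → ContinuousAt H2 (t, y) := fun t y ht =>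
    (aux_cd_apply 0 1 (by norm_num) (by exact_mod_cast hH1 t y ht) (1, 0)).continuousAt
  -- coordinates of `H1`, `H2`
  have hH1c : ∀ t y, |t| < ε → H1 (t, y) = (fderiv ℝ g (t, y) (1, 0),
      fun i => fderiv ℝ (fun q => fderiv ℝ g q (1, 0)) (t, y) (0, Pi.single i 1)) := by
    intro t y ht
    have hgd := ((hg t y ht).differentiableAt (by norm_num)).hasFDerivAt
    have hpd : ∀ i : Fin N, HasFDerivAt (fun q => fderiv ℝ g q (0, Pi.single i 1)) _ (t, y) :=
      fun i => ((hp t y (0, Pi.single i 1) ht).differentiableAt (by norm_num)).hasFDerivAt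
    have := (hgd.prodMk (hasFDerivAt_pi.2 hpd)).fderiv
    have hg2 : ContDiffAt ℝ 2 g (t, y) := (hg t y ht).of_le (by norm_num)
    simp only [hH1def, hHdef]
    rw [this]
    refine Prod.ext rfl ?_
    funext i
    change fderiv ℝ (fun q => fderiv ℝ g q (0, Pi.single i 1)) (t, y) (1, 0)
      = fderiv ℝ (fun q => fderiv ℝ g q (1, 0)) (t, y) (0, Pi.single i 1)
    rw [aux_fd_apply hg2, aux_fd_apply hg2]
    exact aux_symm hg2 _ _
  set g1 : ℝ × (Fin N → ℝ) → ℝ := fun q => fderiv ℝ g q (1, 0) with hg1def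
  have hg1 : ∀ t y, |t| < ε → ContDiffAt ℝ 2 g1 (t, y) := fun t y ht => hp t y _ ht
  have hg2 : ∀ t y v, |t| < ε → ContDiffAt ℝ 1 (fun q => fderiv ℝ g1 q v) (t, y) :=
    fun t y v ht => by
      exact_mod_cast aux_cd_apply 1 2 (by norm_num) (by exact_mod_cast hg1 t y ht) v
  have hH2c : ∀ t y, |t| < ε → H2 (t, y) = (fderiv ℝ g1 (t, y) (1, 0),
      fun i => fderiv ℝ (fun q => fderiv ℝ g1 q (1, 0)) (t, y) (0, Pi.single i 1)) := by
    intro t y ht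
    have heq : H1 =ᶠ[𝓝 (t, y)] fun q => (g1 q, fun i => fderiv ℝ g1 q (0, Pi.single i 1)) := by
      filter_upwards [hnear t y ht] with r hr
      exact hH1c r.1 r.2 hr
    have hgd := ((hg1 t y ht).differentiableAt (by norm_num)).hasFDerivAt
    have hpd : ∀ i : Fin N, HasFDerivAt (fun q => fderiv ℝ g1 q (0, Pi.single i 1)) _ (t, y) :=
      fun i => ((hg2 t y (0, Pi.single i 1) ht).differentiableAt (by norm_num)).hasFDerivAt
    have := (hgd.prodMk (hasFDerivAt_pi.2 hpd)).fderiv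
    simp only [hH2def]
    rw [heq.fderiv_eq, this]
    refine Prod.ext rfl ?_
    funext i
    change fderiv ℝ (fun q => fderiv ℝ g1 q (0, Pi.single i 1)) (t, y) (1, 0)
      = fderiv ℝ (fun q => fderiv ℝ g1 q (1, 0)) (t, y) (0, Pi.single i 1)
    rw [aux_fd_apply (hg1 t y ht), aux_fd_apply (hg1 t y ht)]
    exact aux_symm (hg1 t y ht) _ _
  -- values at time zero
  have hHv : ∀ y, H (0, y) = (u y, grad u y) := by
    intro y
    refine Prod.ext (hg0 y) ?_
    funext i
    exact aux_restrict ((hg 0 y h0).differentiableAt (by norm_num)) hg0 _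
  have hH1v : ∀ y, H1 (0, y) = (-(∑ i, pdv u i y * η y i),
      -(fun i => pdv (fun z => ∑ l, pdv u l z * η z l) i y)) := by
    intro y
    rw [hH1c 0 y h0]
    refine Prod.ext ?_ ?_
    · simp only [hc1, aux_a]
    · funext i
      simp only [aux_a, Pi.neg_apply]
      unfold pdv
      rw [aux_restrict ((hg1 0 y h0).differentiableAt (by norm_num)) hc1]
      rw [show (fun z => -(fderiv ℝ u z (η z))) = -(fun z => fderiv ℝ u z (η z)) from rfl,
        fderiv_neg]
      rfl
  have hc2' : ∀ y, fderiv ℝ g1 (0, y) (1, 0) = X0 u η ζ y := by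
    intro y
    rw [← hc2, ← aux_fd_apply ((hg 0 y h0).of_le (by norm_num))]
  have hH2v : ∀ y, H2 (0, y) = (X0 u η ζ y, fun i => pdv (X0 u η ζ) i y) := by
    intro y
    rw [hH2c 0 y h0]
    refine Prod.ext (hc2' y) ?_
    funext i
    exact aux_restrict ((hg2 0 y _ h0).differentiableAt (by norm_num)) hc2' _
  set G : ℝ × (Fin N → ℝ) → ℝ := fun q => F (H q) with hGdef
  set G1 : ℝ × (Fin N → ℝ) → ℝ := fun q => fderiv ℝ F (H q) (H1 q) with hG1def
  have hG : ∀ t y, |t| < ε → ContDiffAt ℝ 1 G (t, y) := fun t y ht =>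
    (hF.contDiffAt.of_le (by norm_num)).comp (t, y) ((hH t y ht).of_le (by norm_num))
  have hGd : ∀ t y, |t| < ε → fderiv ℝ G (t, y) (1, 0) = G1 (t, y) := by
    intro t y ht
    have := ((hF.differentiable (by norm_num) (H (t, y))).hasFDerivAt.comp (t, y)
      ((hH t y ht).differentiableAt (by norm_num)).hasFDerivAt).fderiv
    change fderiv ℝ (F ∘ H) (t, y) (1, 0) = _
    rw [this]
    rfl
  have hDF : ContDiff ℝ 2 (fderiv ℝ F) := hF.fderiv_right (by norm_num)
  have hDDF : Continuous (fderiv ℝ (fderiv ℝ F)) := hDF.continuous_fderiv (by norm_num)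
  have hG1 : ∀ t y, |t| < ε → ContDiffAt ℝ 1 G1 (t, y) := fun t y ht =>
    ((hDF.contDiffAt.of_le (by norm_num)).comp (t, y) ((hH t y ht).of_le (by norm_num))).clm_apply
      (hH1 t y ht)
  have hG1d : ∀ t y, |t| < ε → fderiv ℝ G1 (t, y) (1, 0) =
      fderiv ℝ (fderiv ℝ F) (H (t, y)) (H1 (t, y)) (H1 (t, y))
        + fderiv ℝ F (H (t, y)) (H2 (t, y)) := by
    intro t y ht
    have h1 := (hDF.differentiable (by norm_num) (H (t, y))).hasFDerivAt.comp (t, y)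
      ((hH t y ht).differentiableAt (by norm_num)).hasFDerivAt
    have h2 := ((hH1 t y ht).differentiableAt (by norm_num)).hasFDerivAt
    have h3 := (h1.clm_apply h2).fderiv
    change fderiv ℝ (fun q => (fderiv ℝ F ∘ H) q (H1 q)) (t, y) (1, 0) = _
    rw [h3, add_comm]
    rfl
  have hinner : ∀ t, |t| < ε → innerA Ω F u Φ t = ∫ y in Ω, G (t, y) := by
    intro t ht
    unfold innerA
    congr 1
    funext y
    have : grad (fun z => u (Function.invFun (Φ t) z)) y
        = fun i => fderiv ℝ g (t, y) (0, Pi.single i 1) := by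
      funext i
      exact (aux_restrict ((hg t y ht).differentiableAt (by norm_num)) (fun z => rfl) _).symm
    rw [this]
  refine ⟨fun t => ∫ y in Ω, G1 (t, y), ?_, ?_⟩
  · have hopen : IsOpen {t : ℝ | |t| < ε} := isOpen_lt continuous_abs continuous_const
    filter_upwards [hopen.mem_nhds h0] with t ht
    have h1 := aux_paramInt Ω hΩo hΩb G ε hG t ht
    simp only [hGd t _ ht] at h1
    refine h1.congr_of_eventuallyEq ?_
    filter_upwards [hopen.mem_nhds ht] with s hs
    exact hinner s hs
  · have h1 := aux_paramInt Ω hΩo hΩb G1 ε hG1 0 h0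
    simp only [hG1d 0 _ h0] at h1
    have hslice : ∀ {V : Type} [TopologicalSpace V] (f : ℝ × (Fin N → ℝ) → V),
        (∀ t y, |t| < ε → ContinuousAt f (t, y)) → Continuous fun y => f (0, y) :=
      fun f hf => continuous_iff_continuousAt.2 fun y =>
        ContinuousAt.comp (f := fun y => ((0:ℝ), y)) (hf 0 y h0) (by fun_prop)
    have cH := hslice H fun t y ht => (hH t y ht).continuousAt
    have cH1 := hslice H1 fun t y ht => (hH1 t y ht).continuousAt
    have cH2 := hslice H2 hH2
    have cI1 : Continuous fun y => fderiv ℝ (fderiv ℝ F) (H (0, y)) (H1 (0, y)) (H1 (0, y)) :=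
      ((hDDF.comp cH).clm_apply cH1).clm_apply cH1
    have cI2 : Continuous fun y => fderiv ℝ F (H (0, y)) (H2 (0, y)) :=
      (hDF.continuous.comp cH).clm_apply cH2
    have hK : IsCompact (closure Ω) := hΩb.isCompact_closure
    rw [integral_add ((cI1.continuousOn.integrableOn_compact hK).mono_set subset_closure)
      ((cI2.continuousOn.integrableOn_compact hK).mono_set subset_closure)] at h1
    convert! h1 using 1
    congr 1
    · congr 1
      funext y
      rw [hHv, hH1v, aux_F2 F hF]
    · congr 1
      funext y
      rw [hHv, hH2v, aux_F1]

end PaperAC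
end

section
/- Let Ω ⊂ ℝ^N be open and bounded, let F : ℝ × ℝ^N → ℝ be of class C³, let u : ℝ^N → ℝ be bounded and of class C³ with all partial derivatives up to order 3 bounded, and let η, ζ : ℝ^N → ℝ^N be bounded and of class C³ with all partial derivatives up to order 3 bounded. Define Φ_t(x) := x + t·η(x) + (t²/2)·ζ(x), let τ > 0 be such that Φ_t is a bijection of ℝ^N for |t| < τ, and set 𝔄₁(t) := ∫_Ω F(u∘Φ_t⁻¹, ∇(u∘Φ_t⁻¹)) dy. Suppose u is a critical point of A, i.e. for every bounded C³ function φ : ℝ^N → ℝ with bounded derivatives, (d/dt)|_{t=0} ∫_Ω F(u + tφ, ∇u + t∇φ) dx = 0. Then 𝔄₁''(0) = (d²/dt²)|_{t=0} ∫_Ω F(u + t(−∇u·η), ∇(u + t(−∇u·η))) dx; in particular the second inner variation 𝔄₁''(0) does not depend on the acceleration field ζ. -/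
open Filter MeasureTheory Topology
open scoped RealInnerProductSpace

namespace PaperAC

lemma integrableOn_aux {N : ℕ} {Ω : Set (Fin N → ℝ)} (hΩb : Bornology.IsBounded Ω)
    {f : (Fin N → ℝ) → ℝ} (hf : Continuous f) : IntegrableOn f Ω :=
  (hf.continuousOn.integrableOn_compact hΩb.isCompact_closure).mono_set subset_closure

lemma slice_cont {N : ℕ} {V : Type*} [TopologicalSpace V] {ε : ℝ}
    {G : ℝ → (Fin N → ℝ) → V}
    (hG : ContinuousOn (fun p : ℝ × (Fin N → ℝ) => G p.1 p.2) (Set.Ioo (-ε) ε ×ˢ Set.univ))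
    {t : ℝ} (ht : t ∈ Set.Ioo (-ε) ε) : Continuous (G t) := by
  rw [← continuousOn_univ]
  exact hG.comp (f := fun y => (t, y)) (by fun_prop) (fun y _ => ⟨ht, trivial⟩)

lemma hasDerivAt_int {N : ℕ} {Ω : Set (Fin N → ℝ)} (hΩo : IsOpen Ω)
    (hΩb : Bornology.IsBounded Ω) {ε : ℝ} {G G' : ℝ → (Fin N → ℝ) → ℝ}
    (hG : ContinuousOn (fun p : ℝ × (Fin N → ℝ) => G p.1 p.2) (Set.Ioo (-ε) ε ×ˢ Set.univ))
    (hG' : ContinuousOn (fun p : ℝ × (Fin N → ℝ) => G' p.1 p.2) (Set.Ioo (-ε) ε ×ˢ Set.univ))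
    (hd : ∀ t ∈ Set.Ioo (-ε) ε, ∀ y, HasDerivAt (fun s => G s y) (G' t y) t)
    {t : ℝ} (ht : t ∈ Set.Ioo (-ε) ε) :
    HasDerivAt (fun s => ∫ y in Ω, G s y) (∫ y in Ω, G' t y) t := by
  obtain ⟨r, hr, hrs⟩ := Metric.nhds_basis_closedBall.mem_iff.1 (isOpen_Ioo.mem_nhds ht)
  have hK : IsCompact (Metric.closedBall t r ×ˢ closure Ω) :=
    (isCompact_closedBall t r).prod hΩb.isCompact_closure
  obtain ⟨C, hC⟩ := hK.exists_bound_of_continuousOn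
    (hG'.mono (Set.prod_mono hrs (Set.subset_univ _)))
  refine (hasDerivAt_integral_of_dominated_loc_of_deriv_le (s := Metric.closedBall t r)
    (bound := fun _ => C) (Metric.closedBall_mem_nhds t hr) ?_ ?_ ?_ ?_ ?_ ?_).2
  · filter_upwards [isOpen_Ioo.mem_nhds ht] with s hs
    exact (slice_cont hG hs).aestronglyMeasurable
  · exact integrableOn_aux hΩb (slice_cont hG ht)
  · exact (slice_cont hG' ht).aestronglyMeasurable
  · filter_upwards [ae_restrict_mem hΩo.measurableSet] with y hy s hs
    exact hC (s, y) ⟨hs, subset_closure hy⟩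
  · exact integrableOn_aux hΩb continuous_const
  · exact Eventually.of_forall fun y s hs => hd s (hrs hs) y

lemma two_derivs {N : ℕ} {Ω : Set (Fin N → ℝ)} (hΩo : IsOpen Ω)
    (hΩb : Bornology.IsBounded Ω) {ε : ℝ} (hε : 0 < ε)
    {F : ℝ × (Fin N → ℝ) → ℝ} (hF : ContDiff ℝ 3 F)
    {q q' q'' : ℝ → (Fin N → ℝ) → ℝ × (Fin N → ℝ)}
    (hq : ContinuousOn (fun p : ℝ × (Fin N → ℝ) => q p.1 p.2) (Set.Ioo (-ε) ε ×ˢ Set.univ))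
    (hq' : ContinuousOn (fun p : ℝ × (Fin N → ℝ) => q' p.1 p.2) (Set.Ioo (-ε) ε ×ˢ Set.univ))
    (hq'' : ContinuousOn (fun p : ℝ × (Fin N → ℝ) => q'' p.1 p.2) (Set.Ioo (-ε) ε ×ˢ Set.univ))
    (hd : ∀ t ∈ Set.Ioo (-ε) ε, ∀ y, HasDerivAt (fun s => q s y) (q' t y) t)
    (hd' : ∀ t ∈ Set.Ioo (-ε) ε, ∀ y, HasDerivAt (fun s => q' s y) (q'' t y) t)
    {A : ℝ → ℝ} (hA : ∀ t ∈ Set.Ioo (-ε) ε, A t = ∫ y in Ω, F (q t y)) :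
    deriv A 0 = ∫ y in Ω, fderiv ℝ F (q 0 y) (q' 0 y) ∧
    deriv (deriv A) 0 = ∫ y in Ω, (fderiv ℝ (fderiv ℝ F) (q 0 y) (q' 0 y) (q' 0 y)
      + fderiv ℝ F (q 0 y) (q'' 0 y)) := by
  have h0 : (0 : ℝ) ∈ Set.Ioo (-ε) ε := ⟨by linarith, hε⟩
  have hF1 : ContDiff ℝ 2 (fderiv ℝ F) := hF.fderiv_right (by norm_num)
  have hF2 : ContDiff ℝ 1 (fderiv ℝ (fderiv ℝ F)) := hF1.fderiv_right (by norm_num)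
  have c0 : ContinuousOn (fun p : ℝ × (Fin N → ℝ) => F (q p.1 p.2))
      (Set.Ioo (-ε) ε ×ˢ Set.univ) := hF.continuous.comp_continuousOn hq
  have c1 : ContinuousOn (fun p : ℝ × (Fin N → ℝ) => fderiv ℝ F (q p.1 p.2) (q' p.1 p.2))
      (Set.Ioo (-ε) ε ×ˢ Set.univ) := (hF1.continuous.comp_continuousOn hq).clm_apply hq'
  have c2 : ContinuousOn (fun p : ℝ × (Fin N → ℝ) =>
      fderiv ℝ (fderiv ℝ F) (q p.1 p.2) (q' p.1 p.2) (q' p.1 p.2)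
      + fderiv ℝ F (q p.1 p.2) (q'' p.1 p.2))
      (Set.Ioo (-ε) ε ×ˢ Set.univ) :=
    (((hF2.continuous.comp_continuousOn hq).clm_apply hq').clm_apply hq').add
      ((hF1.continuous.comp_continuousOn hq).clm_apply hq'')
  have d1 : ∀ t ∈ Set.Ioo (-ε) ε, HasDerivAt A (∫ y in Ω, fderiv ℝ F (q t y) (q' t y)) t := by
    intro t ht
    refine (hasDerivAt_int hΩo hΩb (G := fun t y => F (q t y))
      (G' := fun t y => fderiv ℝ F (q t y) (q' t y)) c0 c1 (fun s hs y => ?_) ht).congr_of_eventuallyEq ?_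
    · exact ((hF.differentiable (by norm_num)) _).hasFDerivAt.comp_hasDerivAt s (hd s hs y)
    · filter_upwards [isOpen_Ioo.mem_nhds ht] with s hs using hA s hs
  refine ⟨(d1 0 h0).deriv, ?_⟩
  refine HasDerivAt.deriv ?_
  refine (hasDerivAt_int hΩo hΩb (G := fun t y => fderiv ℝ F (q t y) (q' t y))
      (G' := fun t y => fderiv ℝ (fderiv ℝ F) (q t y) (q' t y) (q' t y)
      + fderiv ℝ F (q t y) (q'' t y)) c1 c2 (fun s hs y => ?_) h0).congr_of_eventuallyEq ?_
  · have h1 : HasDerivAt (fun s => fderiv ℝ F (q s y))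
        (fderiv ℝ (fderiv ℝ F) (q s y) (q' s y)) s :=
      ((hF1.differentiable (by norm_num)) _).hasFDerivAt.comp_hasDerivAt s (hd s hs y)
    exact h1.clm_apply (hd' s hs y)
  · filter_upwards [isOpen_Ioo.mem_nhds h0] with s hs using (d1 s hs).deriv


lemma mollify {N : ℕ} {Y : (Fin N → ℝ) → ℝ} (hY : ContDiff ℝ 1 Y) (hc : HasCompactSupport Y)
    {δ : ℝ} (hδ : 0 < δ) : ∃ φ : (Fin N → ℝ) → ℝ, ContDiff ℝ 3 φ ∧ BddUpTo 3 φ ∧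
      (∀ x, ‖φ x - Y x‖ ≤ δ) ∧ ∀ x, ‖fderiv ℝ φ x - fderiv ℝ Y x‖ ≤ δ := by
  have hY' : Continuous (fderiv ℝ Y) := hY.continuous_fderiv (by norm_num)
  obtain ⟨r1, hr1, h1⟩ := Metric.uniformContinuous_iff.1
    (hc.uniformContinuous_of_continuous hY.continuous) δ hδ
  obtain ⟨r2, hr2, h2⟩ := Metric.uniformContinuous_iff.1
    ((hc.fderiv ℝ).uniformContinuous_of_continuous hY') δ hδ
  have hr : 0 < min r1 r2 := lt_min hr1 hr2
  let ρ : ContDiffBump (0 : Fin N → ℝ) := ⟨min r1 r2 / 2, min r1 r2, by linarith, by linarith⟩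
  have hcd : ContDiff ℝ 3 (convolution (ρ.normed volume) Y (ContinuousLinearMap.lsmul ℝ ℝ) volume) :=
    HasCompactSupport.contDiff_convolution_left (n := 3) _ (ρ.hasCompactSupport_normed)
      (ρ.contDiff_normed) hY.continuous.locallyIntegrable
  have hcs : HasCompactSupport
      (convolution (ρ.normed volume) Y (ContinuousLinearMap.lsmul ℝ ℝ) volume) :=
    (ρ.hasCompactSupport_normed).convolution _ hc
  refine ⟨_, hcd, ?_, ?_, ?_⟩
  · intro i hi
    have hco : Continuous (iteratedFDeriv ℝ i
        (convolution (ρ.normed volume) Y (ContinuousLinearMap.lsmul ℝ ℝ) volume)) :=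
      hcd.continuous_iteratedFDeriv (by exact_mod_cast hi)
    exact hco.bounded_above_of_compact_support (hcs.iteratedFDeriv i)
  · intro x
    rw [← dist_eq_norm]
    refine ρ.dist_normed_convolution_le hY.continuous.aestronglyMeasurable fun z hz => ?_
    exact (h1 (lt_of_lt_of_le (Metric.mem_ball.1 hz) (min_le_left _ _))).le
  · intro x
    rw [← dist_eq_norm]
    have hfd := hc.hasFDerivAt_convolution_right (ContinuousLinearMap.lsmul ℝ ℝ)
      (μ := volume) (f := ρ.normed volume)
      (ρ.continuous_normed.locallyIntegrable) hY x
    have hL : ((ContinuousLinearMap.lsmul ℝ ℝ : ℝ →L[ℝ] ℝ →L[ℝ] ℝ).precompR (Fin N → ℝ))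
        = ContinuousLinearMap.lsmul ℝ ℝ := by
      ext; simp
    rw [hfd.fderiv, hL]
    refine ρ.dist_normed_convolution_le hY'.aestronglyMeasurable fun z hz => ?_
    exact (h2 (lt_of_lt_of_le (Metric.mem_ball.1 hz) (min_le_right _ _))).le

lemma continuous_grad {N : ℕ} {φ : (Fin N → ℝ) → ℝ} (hφ : ContDiff ℝ 1 φ) :
    Continuous (grad φ) := by
  refine continuous_pi fun i => ?_
  exact (hφ.continuous_fderiv (by norm_num)).clm_apply continuous_const

lemma extend_crit {N : ℕ} {Ω : Set (Fin N → ℝ)} (hΩo : IsOpen Ω)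
    (hΩb : Bornology.IsBounded Ω) {L : (Fin N → ℝ) → (ℝ × (Fin N → ℝ) →L[ℝ] ℝ)}
    (hL : Continuous L)
    (h : ∀ φ : (Fin N → ℝ) → ℝ, ContDiff ℝ 3 φ → BddUpTo 3 φ →
      ∫ y in Ω, L y (φ y, grad φ y) = 0)
    {X : (Fin N → ℝ) → ℝ} (hX : ContDiff ℝ 1 X) :
    ∫ y in Ω, L y (X y, grad X y) = 0 := by
  obtain ⟨R, hR, hΩR⟩ := hΩb.subset_ball_lt 0 0
  let χ : ContDiffBump (0 : Fin N → ℝ) := ⟨R, R + 1, hR, by linarith⟩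
  set Y : (Fin N → ℝ) → ℝ := fun x => χ x * X x with hYdef
  have hY : ContDiff ℝ 1 Y := χ.contDiff.mul hX
  have hYc : HasCompactSupport Y := χ.hasCompactSupport.mul_right
  have hYX : ∀ y ∈ Ω, Y =ᶠ[𝓝 y] X := by
    intro y hy
    filter_upwards [hΩo.mem_nhds hy] with z hz
    have : χ z = 1 := χ.one_of_mem_closedBall (Metric.ball_subset_closedBall (hΩR hz))
    simp [hYdef, this]
  have e1 : ∫ y in Ω, L y (X y, grad X y) = ∫ y in Ω, L y (Y y, grad Y y) := by
    refine setIntegral_congr_fun hΩo.measurableSet fun y hy => ?_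
    have : grad Y y = grad X y := by
      ext i; simp only [grad, pdv, (hYX y hy).fderiv_eq]
    simp only [this, (hYX y hy).eq_of_nhds]
  rw [e1]
  have hint : ∀ {φ : (Fin N → ℝ) → ℝ}, ContDiff ℝ 1 φ →
      IntegrableOn (fun y => L y (φ y, grad φ y)) Ω := fun hφ =>
    integrableOn_aux hΩb (hL.clm_apply (hφ.continuous.prodMk (continuous_grad hφ)))
  obtain ⟨C, hC⟩ := hΩb.isCompact_closure.exists_bound_of_continuousOn hL.continuousOn
  have hvol : volume Ω < ⊤ := hΩb.measure_lt_top
  have key : ∀ δ > 0, ‖∫ y in Ω, L y (Y y, grad Y y)‖ ≤ (|C| * volume.real Ω) * δ := by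
    intro δ hδ
    obtain ⟨φ, hφ, hφb, ha, hb⟩ := mollify hY hYc hδ
    have hφ1 : ContDiff ℝ 1 φ := hφ.of_le (by norm_num)
    have : ∫ y in Ω, L y (Y y, grad Y y)
        = ∫ y in Ω, (L y (Y y, grad Y y) - L y (φ y, grad φ y)) := by
      rw [integral_sub (hint hY) (hint hφ1), h φ hφ hφb, sub_zero]
    rw [this]
    refine (norm_setIntegral_le_of_norm_le_const (C := |C| * δ) hvol fun y hy => ?_).trans
      (le_of_eq (by ring))
    rw [← map_sub]
    refine (ContinuousLinearMap.le_opNorm _ _).trans ?_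
    refine mul_le_mul ((hC y (subset_closure hy)).trans (le_abs_self C)) ?_ (norm_nonneg _)
      (abs_nonneg _)
    rw [Prod.mk_sub_mk, Prod.norm_def]
    refine max_le (by simpa [norm_sub_rev] using ha y) ?_
    refine (pi_norm_le_iff_of_nonneg hδ.le).2 fun i => ?_
    have : (grad Y y - grad φ y) i = -((fderiv ℝ φ y - fderiv ℝ Y y) (Pi.single i 1)) := by
      simp [grad, pdv]
    change ‖(grad Y y - grad φ y) i‖ ≤ δ
    rw [this, norm_neg]
    refine (ContinuousLinearMap.le_opNorm _ _).trans ?_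
    have h1 : ‖(Pi.single i 1 : Fin N → ℝ)‖ = 1 := by simp [Pi.norm_single]
    simpa [h1] using hb y
  rw [← norm_le_zero_iff]
  refine ge_of_tendsto (f := fun δ : ℝ => (|C| * volume.real Ω) * δ) (x := 𝓝[>] 0) ?_ ?_
  · have : Tendsto (fun δ : ℝ => (|C| * volume.real Ω) * δ) (𝓝 0) (𝓝 ((|C| * volume.real Ω) * 0)) :=
      (continuous_const.mul continuous_id).tendsto 0
    rw [mul_zero] at this
    exact this.mono_left nhdsWithin_le_nhds
  · filter_upwards [self_mem_nhdsWithin] with δ hδ using key δ hδ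


lemma fderiv_bdd {N : ℕ} {f : (Fin N → ℝ) → (Fin N → ℝ)} (h : BddUpTo 3 f) :
    ∃ C : ℝ, 0 ≤ C ∧ ∀ x, ‖fderiv ℝ f x‖ ≤ C := by
  obtain ⟨C, hC⟩ := h 1 (by norm_num)
  refine ⟨C, (norm_nonneg _).trans (hC 0), fun x => ?_⟩
  have := hC x
  rwa [norm_iteratedFDeriv_one] at this

lemma inv_smooth {N : ℕ} {η ζ : (Fin N → ℝ) → (Fin N → ℝ)}
    (hη : ContDiff ℝ 3 η) (hηb : BddUpTo 3 η)
    (hζ : ContDiff ℝ 3 ζ) (hζb : BddUpTo 3 ζ)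
    {Φ : ℝ → (Fin N → ℝ) → (Fin N → ℝ)}
    (hΦ : ∀ t x, Φ t x = x + t • η x + (t ^ 2 / 2) • ζ x)
    {τ : ℝ} (hτ : 0 < τ)
    (hbij : ∀ t : ℝ, |t| < τ → Function.Bijective (Φ t)) :
    ∃ ε : ℝ, 0 < ε ∧ ε ≤ τ ∧ ContDiffOn ℝ 3
      (fun p : ℝ × (Fin N → ℝ) => Function.invFun (Φ p.1) p.2)
      (Set.Ioo (-ε) ε ×ˢ Set.univ) := by
  obtain ⟨C1, hC1, h1⟩ := fderiv_bdd hηb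
  obtain ⟨C2, hC2, h2⟩ := fderiv_bdd hζb
  have hpos : 0 < C1 + C2 + 1 := by linarith
  refine ⟨min τ (min 1 (1 / (C1 + C2 + 1))), by positivity, min_le_left _ _, ?_⟩
  set ε := min τ (min 1 (1 / (C1 + C2 + 1))) with hε
  have hετ : ε ≤ τ := min_le_left _ _
  have hε1 : ε ≤ 1 := (min_le_right _ _).trans (min_le_left _ _)
  have hε2 : ε ≤ 1 / (C1 + C2 + 1) := (min_le_right _ _).trans (min_le_right _ _)
  rintro ⟨t, y⟩ ⟨ht, -⟩
  have hta : |t| < ε := abs_lt.2 ht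
  apply ContDiffAt.contDiffWithinAt
  obtain ⟨x, rfl⟩ := (hbij t (hta.trans_le hετ)).2 y
  let Θ : ℝ × (Fin N → ℝ) → ℝ × (Fin N → ℝ) := fun p => (p.1, Φ p.1 p.2)
  have hΘe : Θ = fun p => (p.1, p.2 + p.1 • η p.2 + (p.1 ^ 2 / 2) • ζ p.2) := by
    funext p; simp only [Θ, hΦ]
  have hΘ : ContDiff ℝ 3 Θ := by
    rw [hΘe]
    have a1 : ContDiff ℝ 3 (fun p : ℝ × (Fin N → ℝ) => η p.2) := hη.comp contDiff_snd
    have a2 : ContDiff ℝ 3 (fun p : ℝ × (Fin N → ℝ) => ζ p.2) := hζ.comp contDiff_snd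
    fun_prop
  have hder : HasFDerivAt Θ (fderiv ℝ Θ (t, x)) (t, x) :=
    (hΘ.differentiable (by norm_num) _).hasFDerivAt
  -- derivative in the first coordinate
  have hfst : ∀ v, (fderiv ℝ Θ (t, x) v).1 = v.1 := by
    intro v
    have h : HasFDerivAt (fun p => (Θ p).1)
      ((ContinuousLinearMap.fst ℝ ℝ (Fin N → ℝ)).comp (fderiv ℝ Θ (t, x))) (t, x) := hder.fst
    have h' : HasFDerivAt (fun p => (Θ p).1) (ContinuousLinearMap.fst ℝ ℝ (Fin N → ℝ)) (t, x) :=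
      hasFDerivAt_fst
    have := congrArg (fun L => L v) (h.unique h')
    simpa using this
  have hsnd : ∀ v, (fderiv ℝ Θ (t, x) (0, v)).2
      = v + t • fderiv ℝ η x v + (t ^ 2 / 2) • fderiv ℝ ζ x v := by
    intro v
    have hi : HasFDerivAt (fun z : Fin N → ℝ => (t, z))
        (ContinuousLinearMap.inr ℝ ℝ (Fin N → ℝ)) x := hasFDerivAt_prodMk_right t x
    have h := (HasFDerivAt.comp x hder hi).snd
    have h' : HasFDerivAt (fun z => z + t • η z + (t ^ 2 / 2) • ζ z)
      (ContinuousLinearMap.id ℝ (Fin N → ℝ) + t • fderiv ℝ η x + (t ^ 2 / 2) • fderiv ℝ ζ x) x :=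
      ((hasFDerivAt_id x).add
        (((hη.differentiable (by norm_num) x).hasFDerivAt).const_smul t)).add
        (((hζ.differentiable (by norm_num) x).hasFDerivAt).const_smul (t ^ 2 / 2))
    have e : (fun z => ((Θ ∘ fun z : Fin N → ℝ => (t, z)) z).2)
        = (fun z => z + t • η z + (t ^ 2 / 2) • ζ z) := by
      funext z; simp [hΘe]
    rw [e] at h
    have := congrArg (fun L => L v) (h.unique h')
    simpa using this
  have hinj : Function.Injective (fderiv ℝ Θ (t, x) : ℝ × (Fin N → ℝ) →ₗ[ℝ] ℝ × (Fin N → ℝ)) := by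
    rw [← LinearMap.ker_eq_bot, LinearMap.ker_eq_bot']
    rintro ⟨s, v⟩ hv
    have hv' : fderiv ℝ Θ (t, x) (s, v) = 0 := hv
    have hs : s = 0 := by
      have := hfst (s, v); rw [hv'] at this; simpa using this.symm
    subst hs
    have hw := hsnd v
    rw [hv'] at hw
    have hw' : v = -(t • fderiv ℝ η x v + (t ^ 2 / 2) • fderiv ℝ ζ x v) := by
      rw [eq_neg_iff_add_eq_zero, ← add_assoc]; exact hw.symm
    have n1 : ‖v‖ ≤ |t| * (C1 * ‖v‖) + (t ^ 2 / 2) * (C2 * ‖v‖) := by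
      calc ‖v‖ = ‖t • fderiv ℝ η x v + (t ^ 2 / 2) • fderiv ℝ ζ x v‖ := by
            conv_lhs => rw [hw', norm_neg]
        _ ≤ ‖t • fderiv ℝ η x v‖ + ‖(t ^ 2 / 2) • fderiv ℝ ζ x v‖ := norm_add_le _ _
        _ ≤ _ := by
            rw [norm_smul, norm_smul, Real.norm_eq_abs, Real.norm_eq_abs,
              abs_of_nonneg (by positivity : 0 ≤ t ^ 2 / 2)]
            gcongr
            · exact (fderiv ℝ η x).le_of_opNorm_le (h1 x) v
            · exact (fderiv ℝ ζ x).le_of_opNorm_le (h2 x) v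
    have n2 : t ^ 2 / 2 ≤ |t| := by
      rw [← sq_abs]; nlinarith [abs_nonneg t]
    have n3 : |t| * (C1 + C2 + 1) < 1 := by
      rw [← lt_div_iff₀ hpos]; exact hta.trans_le hε2
    have n4 : (t ^ 2 / 2) * (C2 * ‖v‖) ≤ |t| * (C2 * ‖v‖) :=
      mul_le_mul_of_nonneg_right n2 (by positivity)
    have n5 : ‖v‖ = 0 := by
      by_contra hne
      have hvp : 0 < ‖v‖ := lt_of_le_of_ne (norm_nonneg _) (Ne.symm hne)
      have := mul_lt_mul_of_pos_right n3 hvp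
      nlinarith [mul_nonneg (abs_nonneg t) hvp.le]
    simp [norm_eq_zero.1 n5]
  let e : (ℝ × (Fin N → ℝ)) ≃L[ℝ] (ℝ × (Fin N → ℝ)) :=
    (LinearEquiv.ofInjectiveEndo _ hinj).toContinuousLinearEquiv
  have he : (e : ℝ × (Fin N → ℝ) →L[ℝ] ℝ × (Fin N → ℝ)) = fderiv ℝ Θ (t, x) := by
    ext v <;> rfl
  have hder' : HasFDerivAt Θ (e : ℝ × (Fin N → ℝ) →L[ℝ] ℝ × (Fin N → ℝ)) (t, x) := by
    rw [he]; exact hder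
  have hn : (3 : WithTop ℕ∞) ≠ 0 := by norm_num
  have hloc := (hΘ.contDiffAt (x := (t, x))).to_localInverse hder' hn
  have hri : ∀ᶠ p in 𝓝 (Θ (t, x)), Θ ((hΘ.contDiffAt (x := (t, x))).localInverse hder' hn p) = p :=
    ((hΘ.contDiffAt (x := (t, x))).hasStrictFDerivAt' hder' hn).eventually_right_inverse
  have hev : ∀ᶠ p : ℝ × (Fin N → ℝ) in 𝓝 (Θ (t, x)), |p.1| < τ :=
    (isOpen_lt (by fun_prop) continuous_const).mem_nhds (hta.trans_le hετ)
  refine (contDiff_snd.contDiffAt.comp _ hloc).congr_of_eventuallyEq ?_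
  filter_upwards [hri, hev] with p hp hpτ
  have hp1 := congrArg Prod.fst hp
  have hp2 := congrArg Prod.snd hp
  simp only [Θ] at hp1 hp2
  rw [hp1] at hp2
  simp only [Function.comp]
  conv_lhs => rw [← hp2]
  exact Function.leftInverse_invFun (hbij _ hpτ).1 _


/-- The pair (f, spatial gradient of f). -/
noncomputable def jet {N : ℕ} (f : ℝ × (Fin N → ℝ) → ℝ) (p : ℝ × (Fin N → ℝ)) :
    ℝ × (Fin N → ℝ) :=
  (f p, fun i => fderiv ℝ f p (0, Pi.single i 1))

/-- Time derivative. -/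
noncomputable def dtm {N : ℕ} (f : ℝ × (Fin N → ℝ) → ℝ) (p : ℝ × (Fin N → ℝ)) : ℝ :=
  fderiv ℝ f p (1, 0)

lemma isOpen_strip {N : ℕ} (ε : ℝ) :
    IsOpen (Set.Ioo (-ε) ε ×ˢ (Set.univ : Set (Fin N → ℝ))) := isOpen_Ioo.prod isOpen_univ

lemma contDiffOn_dir {N : ℕ} {ε : ℝ} {f : ℝ × (Fin N → ℝ) → ℝ} {n m : WithTop ℕ∞}
    (hf : ContDiffOn ℝ n f (Set.Ioo (-ε) ε ×ˢ Set.univ)) (h : m + 1 ≤ n)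
    (v : ℝ × (Fin N → ℝ)) :
    ContDiffOn ℝ m (fun p => fderiv ℝ f p v) (Set.Ioo (-ε) ε ×ˢ Set.univ) :=
  (hf.fderiv_of_isOpen (isOpen_strip ε) h).clm_apply contDiffOn_const

lemma jet_cont {N : ℕ} {ε : ℝ} {f : ℝ × (Fin N → ℝ) → ℝ}
    (hf : ContDiffOn ℝ 1 f (Set.Ioo (-ε) ε ×ˢ Set.univ)) :
    ContinuousOn (jet f) (Set.Ioo (-ε) ε ×ˢ Set.univ) := by
  refine hf.continuousOn.prodMk (continuousOn_pi.2 fun i => ?_)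
  exact (contDiffOn_dir (m := 0) hf (by norm_num) _).continuousOn

lemma hasDerivAt_slice {N : ℕ} {V : Type*} [NormedAddCommGroup V] [NormedSpace ℝ V]
    {f : ℝ × (Fin N → ℝ) → V} {t : ℝ} {y : Fin N → ℝ} (hf : DifferentiableAt ℝ f (t, y)) :
    HasDerivAt (fun s => f (s, y)) (fderiv ℝ f (t, y) (1, 0)) t := by
  have h : HasDerivAt (fun s : ℝ => (s, y)) ((1 : ℝ), (0 : Fin N → ℝ)) t :=
    (hasDerivAt_id t).prodMk (hasDerivAt_const t y)
  exact HasFDerivAt.comp_hasDerivAt t hf.hasFDerivAt h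

lemma fderiv_slice {N : ℕ} {f : ℝ × (Fin N → ℝ) → ℝ} {t : ℝ} {y : Fin N → ℝ}
    (hf : DifferentiableAt ℝ f (t, y)) (v : Fin N → ℝ) :
    fderiv ℝ (fun z => f (t, z)) y v = fderiv ℝ f (t, y) (0, v) := by
  have h := HasFDerivAt.comp y hf.hasFDerivAt (hasFDerivAt_prodMk_right t y)
  have e : (f ∘ fun z : Fin N → ℝ => (t, z)) = fun z => f (t, z) := rfl
  rw [e] at h
  rw [h.fderiv]; simp

lemma strip_cda {N : ℕ} {ε : ℝ} {f : ℝ × (Fin N → ℝ) → ℝ} {n : WithTop ℕ∞}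
    (hf : ContDiffOn ℝ n f (Set.Ioo (-ε) ε ×ˢ Set.univ)) {t : ℝ} (ht : t ∈ Set.Ioo (-ε) ε)
    (y : Fin N → ℝ) : ContDiffAt ℝ n f (t, y) :=
  hf.contDiffAt ((isOpen_strip ε).mem_nhds ⟨ht, trivial⟩)

lemma jet_slice {N : ℕ} {ε : ℝ} {f : ℝ × (Fin N → ℝ) → ℝ}
    (hf : ContDiffOn ℝ 1 f (Set.Ioo (-ε) ε ×ˢ Set.univ)) {t : ℝ} (ht : t ∈ Set.Ioo (-ε) ε)
    (y : Fin N → ℝ) : jet f (t, y) = (f (t, y), grad (fun z => f (t, z)) y) := by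
  refine Prod.ext rfl ?_
  funext i
  simp only [jet, grad, pdv]
  rw [fderiv_slice ((strip_cda hf ht y).differentiableAt (by norm_num))]

lemma slice_contDiff {N : ℕ} {ε : ℝ} {f : ℝ × (Fin N → ℝ) → ℝ} {n : WithTop ℕ∞}
    (hf : ContDiffOn ℝ n f (Set.Ioo (-ε) ε ×ˢ Set.univ)) {t : ℝ} (ht : t ∈ Set.Ioo (-ε) ε) :
    ContDiff ℝ n (fun y => f (t, y)) := by
  rw [contDiff_iff_contDiffAt]
  intro y
  exact (strip_cda hf ht y).comp y (f := fun z : Fin N → ℝ => (t, z))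
    (contDiffAt_const.prodMk contDiffAt_id)

lemma jet_deriv {N : ℕ} {ε : ℝ} {f : ℝ × (Fin N → ℝ) → ℝ}
    (hf : ContDiffOn ℝ 2 f (Set.Ioo (-ε) ε ×ˢ Set.univ)) {t : ℝ} (ht : t ∈ Set.Ioo (-ε) ε)
    (y : Fin N → ℝ) : HasDerivAt (fun s => jet f (s, y)) (jet (dtm f) (t, y)) t := by
  have hc := strip_cda hf ht y
  refine (hasDerivAt_slice (hc.differentiableAt (by norm_num))).prodMk ?_
  rw [hasDerivAt_pi]
  intro i
  have hd : DifferentiableAt ℝ (fderiv ℝ f) (t, y) :=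
    (hc.fderiv_right (m := 1) (by norm_num)).differentiableAt (by norm_num)
  have hdir : ∀ v w, fderiv ℝ (fun p => fderiv ℝ f p v) (t, y) w
      = fderiv ℝ (fderiv ℝ f) (t, y) w v := by
    intro v w
    rw [fderiv_clm_apply hd (differentiableAt_const v)]
    simp
  have hs : IsSymmSndFDerivAt ℝ f (t, y) := hc.isSymmSndFDerivAt (by simp)
  have h := hasDerivAt_slice (f := fun p => fderiv ℝ f p (0, Pi.single i 1)) (t := t) (y := y)
    (hd.clm_apply (differentiableAt_const _))
  have e : fderiv ℝ (dtm f) (t, y) (0, Pi.single i 1)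
      = fderiv ℝ (fun p => fderiv ℝ f p (0, Pi.single i 1)) (t, y) (1, 0) := by
    unfold dtm
    rw [hdir, hdir]
    exact hs _ _
  rw [e]
  exact h

/-- If `u` is a critical point of `A(w) := ∫_Ω F(w, ∇w)` (its first
Gateaux variation vanishes for all admissible `φ`), then the second inner variation
`𝔄₁''(0)` equals the second Gateaux variation `d²A(u, −∇u·η)`; in particular it does not
depend on the acceleration field `ζ`. -/
theorem second_inner_variation_of_critical_point
    (N : ℕ) (Ω : Set (Fin N → ℝ)) (hΩo : IsOpen Ω) (hΩb : Bornology.IsBounded Ω)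
    (F : ℝ × (Fin N → ℝ) → ℝ) (hF : ContDiff ℝ 3 F)
    (u : (Fin N → ℝ) → ℝ) (hu : ContDiff ℝ 3 u) (hub : BddUpTo 3 u)
    (η ζ : (Fin N → ℝ) → (Fin N → ℝ))
    (hη : ContDiff ℝ 3 η) (hηb : BddUpTo 3 η)
    (hζ : ContDiff ℝ 3 ζ) (hζb : BddUpTo 3 ζ)
    (Φ : ℝ → (Fin N → ℝ) → (Fin N → ℝ))
    (hΦ : ∀ t x, Φ t x = x + t • η x + (t ^ 2 / 2) • ζ x)
    (τ : ℝ) (hτ : 0 < τ)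
    (hbij : ∀ t : ℝ, |t| < τ → Function.Bijective (Φ t))
    (hcrit : ∀ φ : (Fin N → ℝ) → ℝ, ContDiff ℝ 3 φ → BddUpTo 3 φ →
      deriv (gateauxA Ω F u φ) 0 = 0) :
    deriv (deriv (innerA Ω F u Φ)) 0
      = deriv (deriv (gateauxA Ω F u (nGradDot u η))) 0 := by
  obtain ⟨ε, hε, hετ, hinv⟩ := inv_smooth hη hηb hζ hζb hΦ hτ hbij
  have h0 : (0 : ℝ) ∈ Set.Ioo (-ε) ε := ⟨by linarith, hε⟩
  set w : ℝ × (Fin N → ℝ) → ℝ := fun p => u (Function.invFun (Φ p.1) p.2) with hw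
  have hw3 : ContDiffOn ℝ 3 w (Set.Ioo (-ε) ε ×ˢ Set.univ) := hu.comp_contDiffOn hinv
  have hw2 : ContDiffOn ℝ 2 (dtm w) (Set.Ioo (-ε) ε ×ˢ Set.univ) :=
    contDiffOn_dir hw3 (by norm_num) _
  have hw1 : ContDiffOn ℝ 1 (dtm (dtm w)) (Set.Ioo (-ε) ε ×ˢ Set.univ) :=
    contDiffOn_dir hw2 (by norm_num) _
  have hcomp : ∀ t ∈ Set.Ioo (-ε) ε, ∀ x, w (t, Φ t x) = u x := by
    intro t ht x
    simp only [hw]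
    rw [Function.leftInverse_invFun (hbij t ((abs_lt.2 ht).trans_le hετ)).1 x]
  have hΦ0 : ∀ x, Φ 0 x = x := by intro x; simp [hΦ]
  have hw0 : (fun y => w (0, y)) = u := by
    funext y
    have := hcomp 0 h0 y
    rwa [hΦ0] at this
  have hwt : (fun y => dtm w (0, y)) = nGradDot u η := by
    funext y
    have hdw : DifferentiableAt ℝ w (0, y) :=
      (strip_cda hw3 h0 y).differentiableAt (by norm_num)
    have hcurve : HasDerivAt (fun t => (t, Φ t y)) ((1 : ℝ), η y) 0 := by
      refine (hasDerivAt_id (0 : ℝ)).prodMk ?_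
      have e : (fun t => Φ t y) = fun t => y + t • η y + (t ^ 2 / 2) • ζ y := by
        funext t; exact hΦ t y
      rw [e]
      have h1 : HasDerivAt (fun t : ℝ => t • η y) ((1 : ℝ) • η y) 0 :=
        (hasDerivAt_id (0 : ℝ)).smul_const (η y)
      have h2 : HasDerivAt (fun t : ℝ => (t ^ 2 / 2) • ζ y)
          ((((2 : ℕ) : ℝ) * (0 : ℝ) ^ (2 - 1) / 2) • ζ y) 0 :=
        ((hasDerivAt_pow 2 (0 : ℝ)).div_const 2).smul_const (ζ y)
      have h3 := (h1.const_add y).add h2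
      have h4 := h3.congr_deriv (g' := η y) (by simp)
      exact h4
    have hdw' : HasFDerivAt w (fderiv ℝ w (0, y)) ((fun t => (t, Φ t y)) (0 : ℝ)) := by
      simp only [hΦ0]; exact hdw.hasFDerivAt
    have hc := hdw'.comp_hasDerivAt (0 : ℝ) hcurve
    have hc' : HasDerivAt (w ∘ fun t => (t, Φ t y)) 0 0 := by
      refine (hasDerivAt_const (0 : ℝ) (u y)).congr_of_eventuallyEq ?_
      filter_upwards [isOpen_Ioo.mem_nhds h0] with t ht using hcomp t ht y
    have hz := hc.unique hc'
    have hsplit : ((1 : ℝ), η y) = (1, 0) + (0, η y) := by simp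
    rw [hsplit, map_add, ← fderiv_slice hdw, hw0] at hz
    have hsum : fderiv ℝ u y (η y) = ∑ i, pdv u i y * η y i := by
      conv_lhs => rw [← Finset.univ_sum_single (η y), map_sum]
      refine Finset.sum_congr rfl fun i _ => ?_
      have : (Pi.single i (η y i) : Fin N → ℝ) = η y i • Pi.single i 1 := by
        rw [← Pi.single_smul]; simp
      rw [this, map_smul, smul_eq_mul, mul_comm, pdv]
    simp only [nGradDot, dtm, ← hsum]
    linarith
  set X : (Fin N → ℝ) → ℝ := fun y => dtm (dtm w) (0, y) with hX
  have hX1 : ContDiff ℝ 1 X := slice_contDiff hw1 h0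
  have hφ1 : ContDiff ℝ 1 (nGradDot u η) := by
    rw [← hwt]; exact (slice_contDiff hw2 h0).of_le (by norm_num)
  have hu1 : ContDiff ℝ 1 u := hu.of_le (by norm_num)
  have j0 : ∀ y, jet w (0, y) = (u y, grad u y) := by
    intro y
    rw [jet_slice (hw3.of_le (by norm_num)) h0, hw0, ← hw0]
  have j1 : ∀ y, jet (dtm w) (0, y) = (nGradDot u η y, grad (nGradDot u η) y) := by
    intro y
    rw [jet_slice (hw2.of_le (by norm_num)) h0, hwt, ← hwt]
  have j2 : ∀ y, jet (dtm (dtm w)) (0, y) = (X y, grad X y) := by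
    intro y
    rw [jet_slice hw1 h0]
  -- outer variations
  have outer : ∀ φ : (Fin N → ℝ) → ℝ, ContDiff ℝ 1 φ →
      deriv (gateauxA Ω F u φ) 0 = ∫ y in Ω, fderiv ℝ F (u y, grad u y) (φ y, grad φ y) ∧
      deriv (deriv (gateauxA Ω F u φ)) 0 = ∫ y in Ω,
        fderiv ℝ (fderiv ℝ F) (u y, grad u y) (φ y, grad φ y) (φ y, grad φ y) := by
    intro φ hφ
    have ca : Continuous fun y => (u y, grad u y) := hu1.continuous.prodMk (continuous_grad hu1)
    have cb : Continuous fun y => (φ y, grad φ y) := hφ.continuous.prodMk (continuous_grad hφ)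
    have := two_derivs hΩo hΩb one_pos hF
      (q := fun t y => (u y, grad u y) + t • (φ y, grad φ y))
      (q' := fun _ y => (φ y, grad φ y)) (q'' := fun _ _ => 0)
      (Continuous.continuousOn ((ca.comp continuous_snd).add
        (continuous_fst.smul (cb.comp continuous_snd))))
      (Continuous.continuousOn (cb.comp continuous_snd))
      continuousOn_const
      (fun t _ y => by
        have h := ((hasDerivAt_id t).smul_const (φ y, grad φ y)).const_add (u y, grad u y)
        simpa using h)
      (fun t _ y => hasDerivAt_const t _) (A := gateauxA Ω F u φ)
      (fun t _ => rfl)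
    simpa using this
  have inner := (two_derivs hΩo hΩb hε hF
      (q := fun t y => jet w (t, y)) (q' := fun t y => jet (dtm w) (t, y))
      (q'' := fun t y => jet (dtm (dtm w)) (t, y))
      (jet_cont (hw3.of_le (by norm_num))) (jet_cont (hw2.of_le (by norm_num))) (jet_cont hw1)
      (fun t ht y => jet_deriv (hw3.of_le (by norm_num)) ht y)
      (fun t ht y => jet_deriv hw2 ht y) (A := innerA Ω F u Φ)
      (fun t ht => by
        simp only [innerA]
        congr 1
        funext y
        rw [jet_slice (hw3.of_le (by norm_num)) ht])).2
  simp only [j0, j1, j2] at inner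
  rw [inner, (outer _ hφ1).2]
  have ca : Continuous fun y => (u y, grad u y) := hu1.continuous.prodMk (continuous_grad hu1)
  have cb : Continuous fun y => (nGradDot u η y, grad (nGradDot u η) y) :=
    hφ1.continuous.prodMk (continuous_grad hφ1)
  have cX : Continuous fun y => (X y, grad X y) := hX1.continuous.prodMk (continuous_grad hX1)
  have hF1 : ContDiff ℝ 2 (fderiv ℝ F) := hF.fderiv_right (by norm_num)
  have hF2 : Continuous (fderiv ℝ (fderiv ℝ F)) := hF1.continuous_fderiv (by norm_num)
  have hL : Continuous fun y => fderiv ℝ F (u y, grad u y) := hF1.continuous.comp ca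
  have hM : Continuous fun y => fderiv ℝ (fderiv ℝ F) (u y, grad u y) := hF2.comp ca
  have hz : ∫ y in Ω, fderiv ℝ F (u y, grad u y) (X y, grad X y) = 0 :=
    extend_crit hΩo hΩb hL (fun φ hφ hφb => by
      rw [← (outer φ (hφ.of_le (by norm_num))).1]; exact hcrit φ hφ hφb) hX1
  rw [integral_add (integrableOn_aux hΩb ((hM.clm_apply cb).clm_apply cb))
    (integrableOn_aux hΩb (hL.clm_apply cX)), hz, add_zero]

end PaperAC
end
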